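/- For every polynomial v in the Adini shape function space P_A the following hold: (1) for each i with 1 ≤ i ≤ d, the second derivative ∂²v/∂x_i² belongs to Q₁; (2) for each pair i ≠ j, the mixed second derivative ∂²v/∂x_i∂x_j belongs to span{p·q̃ : p ∈ {1, x_i, x_j}, q̃ ∈ Q₁^{i,j}} + span{x_k²·q̃ : 1 ≤ k ≤ d, q̃ ∈ Q₁^{i,j}}. -/

import Mathlib

open MvPolynomial MeasureTheory

/-- `Q₁`: the span of the monomials `x^α` with `α i ≤ 1` for every `i`. -/
noncomputable def Q1 (d : ℕ) : Submodule ℝ (MvPolynomial (Fin d) ℝ) :=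
  Submodule.span ℝ {p | ∃ α : Fin d →₀ ℕ, (∀ i, α i ≤ 1) ∧ p = monomial α (1 : ℝ)}

/-- The Adini shape function space `P_A = Q₁ + span{x_i² q : 1 ≤ i ≤ d, q ∈ Q₁}`. -/
noncomputable def PA (d : ℕ) : Submodule ℝ (MvPolynomial (Fin d) ℝ) :=
  Q1 d ⊔ Submodule.span ℝ {p | ∃ i : Fin d, ∃ q ∈ Q1 d, p = X i ^ 2 * q}

/-- `Q₁^i`: elements of `Q₁` of degree 0 in `x_i`. -/
noncomputable def Q1i (d : ℕ) (i : Fin d) : Submodule ℝ (MvPolynomial (Fin d) ℝ) :=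
  Submodule.span ℝ
    {p | ∃ α : Fin d →₀ ℕ, (∀ j, α j ≤ 1) ∧ α i = 0 ∧ p = monomial α (1 : ℝ)}

/-- `S^i = span{((x_j − c_j)² − h_j²) q̂ : 1 ≤ j ≤ d, q̂ ∈ Q₁^i}`. -/
noncomputable def Si (d : ℕ) (c h : Fin d → ℝ) (i : Fin d) :
    Submodule ℝ (MvPolynomial (Fin d) ℝ) :=
  Submodule.span ℝ
    {p | ∃ j : Fin d, ∃ q ∈ Q1i d i, p = ((X j - C (c j)) ^ 2 - C (h j ^ 2)) * q}

/-- The vertices of the `d`-rectangle with centre `c` and half-lengths `h`. -/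
def IsVertex {d : ℕ} (c h : Fin d → ℝ) (a : Fin d → ℝ) : Prop :=
  ∀ i, a i = c i - h i ∨ a i = c i + h i

/-- The `d`-rectangle `K = ∏_i [c_i − h_i, c_i + h_i]`. -/
def box {d : ℕ} (c h : Fin d → ℝ) : Set (Fin d → ℝ) :=
  Set.univ.pi fun i => Set.Icc (c i - h i) (c i + h i)

/-- The iterated partial derivative `∂^α`. -/
noncomputable def pderivPow {d : ℕ} (α : Fin d → ℕ) :
    MvPolynomial (Fin d) ℝ →ₗ[ℝ] MvPolynomial (Fin d) ℝ :=
  (List.ofFn fun i : Fin d =>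
    ((pderiv (R := ℝ) i).toLinearMap :
        Module.End ℝ (MvPolynomial (Fin d) ℝ)) ^ α i).prod

/-- `Q₁^{i,j}`: elements of `Q₁` of degree 0 in both `x_i` and `x_j`. -/
noncomputable def Q1ij (d : ℕ) (i j : Fin d) : Submodule ℝ (MvPolynomial (Fin d) ℝ) :=
  Submodule.span ℝ
    {p | ∃ α : Fin d →₀ ℕ, (∀ k, α k ≤ 1) ∧ α i = 0 ∧ α j = 0 ∧ p = monomial α (1 : ℝ)}

/-!
All the spaces involved are spanned by monomials, so each is the space of polynomials with exponents
in some set, and `∂/∂xᵢ` replaces an exponent set `s` by the shifted set `{α | α + eᵢ ∈ s}`. The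
exponents of `P_A` are the `β` and the `2eₖ + β` with all entries of `β` at most `1`. If `α + 2eᵢ`
is of this form, then it is `2eᵢ + β` with `β = α`. If `α + eᵢ + eⱼ` is of this form with `i ≠ j`,
then subtracting one of `0`, `eᵢ`, `eⱼ` or `2eₖ` from `α` leaves an exponent with entries at most
`1` that vanishes at `i` and `j`.
-/

open Finsupp (single)
open scoped Pointwise

section Span

variable {R A : Type*} [CommSemiring R] [Semiring A] [Algebra R A]

theorem span_setOf_mul_eq_span_mul (s : Set A) (N : Submodule R A) :
    Submodule.span R {r | ∃ p ∈ s, ∃ q ∈ N, r = p * q} = Submodule.span R s * N := by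
  have mul_eq : {r | ∃ p ∈ s, ∃ q ∈ N, r = p * q} = s * (N : Set A) := by
    ext r
    simp only [Set.mem_ofPred_eq, Set.mem_mul, SetLike.mem_coe, eq_comm]
  rw [mul_eq, ← Submodule.span_mul_span, Submodule.span_eq]

theorem span_setOf_range_mul_eq_span_mul {ι : Type*} (f : ι → A) (N : Submodule R A) :
    Submodule.span R {r | ∃ k, ∃ q ∈ N, r = f k * q} = Submodule.span R (Set.range f) * N := by
  rw [← span_setOf_mul_eq_span_mul]
  simp only [Set.exists_range_iff]

end Span

section Exponents

variable {σ : Type*} {α : σ →₀ ℕ} {i j : σ}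

/-- Exponents of the multiaffine monomials, which span `Q₁`. -/
def multiaffineExponents (σ : Type*) : Set (σ →₀ ℕ) :=
  {α | ∀ k, α k ≤ 1}

/-- Exponents of the multiaffine monomials free of `xᵢ` and `xⱼ`, which span `Q₁^{i,j}`. -/
def multiaffineExponentsFreeOf (i j : σ) : Set (σ →₀ ℕ) :=
  {α | (∀ k, α k ≤ 1) ∧ α i = 0 ∧ α j = 0}

/-- Exponents of the monomials that span the Adini space `P_A`. -/
def adiniExponents (σ : Type*) : Set (σ →₀ ℕ) :=
  insert 0 (Set.range fun k => single k 2) + multiaffineExponents σ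

/-- Exponents of the monomials that span the space containing `∂²v/∂xᵢ∂xⱼ` for `v ∈ P_A`. -/
def adiniMixedExponents (i j : σ) : Set (σ →₀ ℕ) :=
  ({0, single i 1, single j 1} ∪ Set.range fun k => single k 2) + multiaffineExponentsFreeOf i j

theorem mem_adiniExponents :
    α ∈ adiniExponents σ ↔ α ∈ multiaffineExponents σ ∨
      ∃ k, ∃ β ∈ multiaffineExponents σ, single k 2 + β = α := by
  simp only [adiniExponents, Set.mem_add, Set.exists_mem_insert, Set.exists_range_iff, zero_add,
    exists_eq_right]

theorem mem_multiaffineExponents_of_add_single_add_single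
    (hα : α + single i 1 + single i 1 ∈ adiniExponents σ) : α ∈ multiaffineExponents σ := by
  classical
  rcases mem_adiniExponents.1 hα with hα | ⟨k, β, hβ, hkβ⟩
  · have := hα i
    simp at this
  · have apply_eq (t : σ) := DFunLike.congr_fun hkβ t
    simp only [Finsupp.add_apply, Finsupp.single_apply] at apply_eq
    have hki : k = i := by
      by_contra hki
      grind [apply_eq i, hβ i]
    intro t
    grind [apply_eq t, hβ t]

theorem adiniMixedExponents_comm : adiniMixedExponents i j = adiniMixedExponents j i := by
  simp only [adiniMixedExponents, multiaffineExponentsFreeOf, Set.pair_comm (single i 1),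
    and_comm (b := (_ : σ →₀ ℕ) j = 0)]

theorem mem_adiniMixedExponents_of_mem_multiaffineExponentsFreeOf
    (hα : α ∈ multiaffineExponentsFreeOf i j) : α ∈ adiniMixedExponents i j :=
  Set.mem_add.2 ⟨0, by simp, α, hα, zero_add α⟩

theorem single_two_add_mem_adiniMixedExponents (k : σ)
    (hα : α ∈ multiaffineExponentsFreeOf i j) : single k 2 + α ∈ adiniMixedExponents i j :=
  Set.add_mem_add (Or.inr ⟨k, rfl⟩) hα

theorem mem_adiniMixedExponents_of_apply_right_eq_zero
    (hi : α i = 1 ∨ α i = 2) (hj : α j = 0) (hα : ∀ k, k ≠ i → α k ≤ 1) :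
    α ∈ adiniMixedExponents i j := by
  classical
  have erase_mem : α.erase i ∈ multiaffineExponentsFreeOf i j := by
    refine ⟨fun k => ?_, Finsupp.erase_same, ?_⟩ <;> grind
  rw [← Finsupp.single_add_erase i α]
  rcases hi with hi | hi <;> rw [hi]
  · exact Set.add_mem_add (by simp) erase_mem
  · exact single_two_add_mem_adiniMixedExponents i erase_mem

theorem mem_adiniMixedExponents_of_add_single_add_single (hij : i ≠ j)
    (hα : α + single i 1 + single j 1 ∈ adiniExponents σ) : α ∈ adiniMixedExponents i j := by
  classical
  rcases mem_adiniExponents.1 hα with hα | ⟨k, β, hβ, hkβ⟩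
  · have add_le (t : σ) := hα t
    simp only [Finsupp.add_apply, Finsupp.single_apply] at add_le
    refine mem_adiniMixedExponents_of_mem_multiaffineExponentsFreeOf ⟨fun t => ?_, ?_, ?_⟩
    · grind [add_le t]
    · grind [add_le i]
    · grind [add_le j]
  have apply_eq (t : σ) := DFunLike.congr_fun hkβ t
  simp only [Finsupp.add_apply, Finsupp.single_apply] at apply_eq
  have hi := apply_eq i
  have hj := apply_eq j
  have hβi := hβ i
  have hβj := hβ j
  by_cases hki : k = i
  · have apply_left : α i = 1 + β i := by grind
    have apply_right : α j = 0 := by grind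
    exact mem_adiniMixedExponents_of_apply_right_eq_zero (by lia) apply_right
      fun t ht => by grind [apply_eq t, hβ t]
  by_cases hkj : k = j
  · have apply_left : α i = 0 := by grind
    have apply_right : α j = 1 + β j := by grind
    rw [adiniMixedExponents_comm]
    exact mem_adiniMixedExponents_of_apply_right_eq_zero (by lia) apply_left
      fun t ht => by grind [apply_eq t, hβ t]
  have apply_left : α i = 0 := by grind
  have apply_right : α j = 0 := by grind
  have single_le : single k 2 ≤ α := Finsupp.single_le_iff.2 (by grind [apply_eq k])
  rw [← add_tsub_cancel_of_le single_le]
  refine single_two_add_mem_adiniMixedExponents k ⟨fun t => ?_, ?_, ?_⟩ <;>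
    simp only [Finsupp.tsub_apply, Finsupp.single_apply]
  · grind [apply_eq t, hβ t]
  · grind
  · grind

end Exponents

section Spaces

variable {σ R : Type*} [CommSemiring R]

theorem pderiv_mem_restrictSupport {s : Set (σ →₀ ℕ)} {p : MvPolynomial σ R}
    (hp : p ∈ restrictSupport R s) (i : σ) :
    pderiv i p ∈ restrictSupport R {α | α + single i 1 ∈ s} := by
  rw [mem_restrictSupport_iff] at hp ⊢
  intro α hα
  rw [Finset.mem_coe, mem_support_iff, coeff_pderiv] at hα
  exact hp (mem_support_iff.2 (left_ne_zero_of_mul hα))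

/-- The Adini space `P_A` in variables indexed by `σ` over `R`, where `restrictDegree σ R 1` is `Q₁`
and the generator `1` accounts for the summand `Q₁`. -/
noncomputable def adiniSpace (σ R : Type*) [CommSemiring R] : Submodule R (MvPolynomial σ R) :=
  Submodule.span R (insert 1 (Set.range fun k => X k ^ 2)) * restrictDegree σ R 1

/-- The space containing `∂²v/∂xᵢ∂xⱼ` for `v ∈ P_A`, in variables indexed by `σ` over `R`. -/
noncomputable def adiniMixedSpace (R : Type*) [CommSemiring R] (i j : σ) :
    Submodule R (MvPolynomial σ R) :=
  Submodule.span R ({1, X i, X j} ∪ Set.range fun k => X k ^ 2) *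
    restrictSupport R (multiaffineExponentsFreeOf i j)

theorem image_monomial_range_single_two :
    (monomial · (1 : R)) '' Set.range (fun k : σ => single k 2) = Set.range fun k => X k ^ 2 := by
  simp only [← Set.range_comp, Function.comp_def, X_pow_eq_monomial]

theorem adiniSpace_eq_restrictSupport : adiniSpace σ R = restrictSupport R (adiniExponents σ) := by
  rw [adiniExponents, restrictSupport_add, restrictSupport_eq_span (R := R) (insert _ _),
    Set.image_insert_eq, image_monomial_range_single_two]
  rfl

theorem adiniMixedSpace_eq_restrictSupport (i j : σ) :
    adiniMixedSpace R i j = restrictSupport R (adiniMixedExponents i j) := by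
  rw [adiniMixedExponents, restrictSupport_add, restrictSupport_eq_span (R := R) (_ ∪ _),
    Set.image_union, Set.image_insert_eq, Set.image_pair, image_monomial_range_single_two]
  rfl

theorem adini_second_derivatives_general {v : MvPolynomial σ R} (hv : v ∈ adiniSpace σ R) :
    (∀ i, pderiv i (pderiv i v) ∈ restrictDegree σ R 1) ∧
      ∀ i j, i ≠ j → pderiv i (pderiv j v) ∈ adiniMixedSpace R i j := by
  rw [adiniSpace_eq_restrictSupport] at hv
  have pderiv_pderiv_mem (i j : σ) :=
    pderiv_mem_restrictSupport (pderiv_mem_restrictSupport hv j) i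
  refine ⟨fun i => ?_, fun i j hij => ?_⟩
  · exact restrictSupport_mono R
      (fun _ hα => mem_multiaffineExponents_of_add_single_add_single hα) (pderiv_pderiv_mem i i)
  · rw [adiniMixedSpace_eq_restrictSupport]
    exact restrictSupport_mono R
      (fun _ hα => mem_adiniMixedExponents_of_add_single_add_single hij hα) (pderiv_pderiv_mem i j)

end Spaces

section RealSpaces

variable {d : ℕ}

theorem Q1_eq_restrictDegree : Q1 d = restrictDegree (Fin d) ℝ 1 := by
  rw [restrictDegree, restrictSupport_eq_span, Q1]
  congr 1
  ext p
  simp only [Set.mem_ofPred_eq, Set.mem_image, eq_comm]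

theorem Q1ij_eq_restrictSupport (i j : Fin d) :
    Q1ij d i j = restrictSupport ℝ (multiaffineExponentsFreeOf i j) := by
  rw [restrictSupport_eq_span, Q1ij]
  congr 1
  ext p
  simp only [multiaffineExponentsFreeOf, Set.mem_ofPred_eq, Set.mem_image, and_assoc, eq_comm]

theorem PA_eq_adiniSpace : PA d = adiniSpace (Fin d) ℝ := by
  rw [PA, adiniSpace, span_setOf_range_mul_eq_span_mul, Q1_eq_restrictDegree,
    Submodule.span_insert, Submodule.sup_mul, ← Submodule.one_eq_span, one_mul]

theorem span_sup_span_eq_adiniMixedSpace (i j : Fin d) :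
    Submodule.span ℝ
        {r | ∃ p ∈ ({1, X i, X j} : Set (MvPolynomial (Fin d) ℝ)), ∃ q ∈ Q1ij d i j, r = p * q} ⊔
      Submodule.span ℝ {r | ∃ k : Fin d, ∃ q ∈ Q1ij d i j, r = X k ^ 2 * q} =
    adiniMixedSpace ℝ i j := by
  rw [span_setOf_mul_eq_span_mul, span_setOf_range_mul_eq_span_mul, ← Submodule.sup_mul,
    ← Submodule.span_union, Q1ij_eq_restrictSupport, adiniMixedSpace]

end RealSpaces

/-- for every `v ∈ P_A`, (1) `∂²v/∂x_i² ∈ Q₁` for every `i`, and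
(2) for `i ≠ j`, `∂²v/∂x_i∂x_j ∈ span{p q̃ : p ∈ {1, x_i, x_j}, q̃ ∈ Q₁^{i,j}}
+ span{x_k² q̃ : 1 ≤ k ≤ d, q̃ ∈ Q₁^{i,j}}`. -/
theorem adini_second_derivatives (d : ℕ) (hd : 1 ≤ d) (c h : Fin d → ℝ)
    (hh : ∀ i, 0 < h i) (v : MvPolynomial (Fin d) ℝ) (hv : v ∈ PA d) :
    (∀ i : Fin d, pderiv i (pderiv i v) ∈ Q1 d) ∧
    (∀ i j : Fin d, i ≠ j →
      pderiv i (pderiv j v) ∈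
        Submodule.span ℝ
            {r | ∃ p ∈ ({1, X i, X j} : Set (MvPolynomial (Fin d) ℝ)),
              ∃ q ∈ Q1ij d i j, r = p * q} ⊔
          Submodule.span ℝ
            {r | ∃ k : Fin d, ∃ q ∈ Q1ij d i j, r = X k ^ 2 * q}) := by
  simp only [span_sup_span_eq_adiniMixedSpace, Q1_eq_restrictDegree]
  exact adini_second_derivatives_general (PA_eq_adiniSpace ▸ hv)
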